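/- Let n ≥ 2 and N ≥ 1. On the open set U = { k : ZMod N → (Fin n → ℝ) | k^1_s ≠ 0 for all s }, define the vector fields X(k) = ℋ(k)(∇F(k)) and Y(k) = ℋ(k)(∇G(k)), where ∇F(k)^1_s = 1/k^1_s and ∇F(k)^i_s = 0 for i ≥ 2, and ∇G(k)^1_s = −k^2_{s+1}/((k^1_s)^2 k^1_{s+1}) − k^2_s/((k^1_s)^2 k^1_{s−1}), ∇G(k)^2_s = 1/(k^1_s k^1_{s−1}), ∇G(k)^i_s = 0 for i ≥ 3. Then the Lie bracket of X and Y vanishes on U: for every k ∈ U, (DY)(k)[X(k)] − (DX)(k)[Y(k)] = 0, where D denotes the Fréchet derivative of the map k ↦ X(k) (respectively k ↦ Y(k)) on the finite-dimensional space of maps ZMod N → (Fin n → ℝ). -/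

import Mathlib

/-- The operator `ℋ(k)` acting on sequences `θ : ZMod N → Fin n → ℝ`.
With the paper's components `i = 1,…,n` corresponding to the Lean indices
`0,…,n-1`, this is
`(ℋ(k)θ)^i_s = θ^{n+1−i}_{s+n+1−i} − θ^{n+1−i}_{s−i}
  + Σ_{j=1}^{n−i} ( k^{i+j}_{s+j} θ^j_{s+j} − k^{i+j}_s θ^j_{s−i} )`. -/
noncomputable def Hop {n N : ℕ} (k : ZMod N → Fin n → ℝ)
    (θ : ZMod N → Fin n → ℝ) : ZMod N → Fin n → ℝ := fun s i =>
  (∑ m : Fin n, if (m : ℕ) + (i : ℕ) + 1 = n then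
      θ (s + ((n - (i : ℕ) : ℕ) : ZMod N)) m
        - θ (s - (((i : ℕ) + 1 : ℕ) : ZMod N)) m
    else 0)
  + ∑ j : Fin n, ∑ m : Fin n, if (m : ℕ) = (i : ℕ) + (j : ℕ) + 1 then
      k (s + (((j : ℕ) + 1 : ℕ) : ZMod N)) m *
          θ (s + (((j : ℕ) + 1 : ℕ) : ZMod N)) j
        - k s m * θ (s - (((i : ℕ) + 1 : ℕ) : ZMod N)) j
    else 0

/-- The gradient `∇F(k)` of the functional `F = Σ_s ln k^1_s`:
`∇F(k)^1_s = 1/k^1_s` and `∇F(k)^i_s = 0` for `i ≥ 2`. -/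
noncomputable def gradF {n N : ℕ} (k : ZMod N → Fin n → ℝ) :
    ZMod N → Fin n → ℝ := fun s i =>
  if (i : ℕ) = 0 then 1 / k s i else 0

/-- The gradient `∇G(k)` of the functional `G = Σ_s k^2_{s+1}/(k^1_s k^1_{s+1})`:
`∇G(k)^1_s = −k^2_{s+1}/((k^1_s)^2 k^1_{s+1}) − k^2_s/((k^1_s)^2 k^1_{s−1})`,
`∇G(k)^2_s = 1/(k^1_s k^1_{s−1})`, and `∇G(k)^i_s = 0` for `i ≥ 3`
(the components `k^1, k^2` are selected by indicator sums). -/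
noncomputable def gradG {n N : ℕ} (k : ZMod N → Fin n → ℝ) :
    ZMod N → Fin n → ℝ := fun s j =>
  if (j : ℕ) = 0 then
    -((∑ m : Fin n, if (m : ℕ) = 1 then k (s + 1) m else 0) /
        ((k s j) ^ 2 * k (s + 1) j))
      - (∑ m : Fin n, if (m : ℕ) = 1 then k s m else 0) /
        ((k s j) ^ 2 * k (s - 1) j)
  else if (j : ℕ) = 1 then
    1 / ((∑ m : Fin n, if (m : ℕ) = 0 then k s m else 0) *
         (∑ m : Fin n, if (m : ℕ) = 0 then k (s - 1) m else 0))
  else 0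

noncomputable def gXs {Z : Type*} [CommRing Z] (K : ℕ → Z → ℝ) (r : Z → ℝ) (m : ℕ) (s : Z) : ℝ :=
  K (m+1) (s+1) * r (s+1) - K (m+1) s * r (s - (m+1))
noncomputable def gg {Z : Type*} [CommRing Z] (K : ℕ → Z → ℝ) (r : Z → ℝ) (s : Z) : ℝ :=
  -(K 1 (s+1) * r s ^ 2 * r (s+1)) - K 1 s * r s ^ 2 * r (s-1)
noncomputable def gh {Z : Type*} [CommRing Z] (r : Z → ℝ) (s : Z) : ℝ := r s * r (s-1)
noncomputable def gYs {Z : Type*} [CommRing Z] (K : ℕ → Z → ℝ) (r : Z → ℝ) (m : ℕ) (s : Z) : ℝ :=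
  K (m+1) (s+1) * gg K r (s+1) - K (m+1) s * gg K r (s - (m+1))
  + (K (m+2) (s+2) * gh r (s+2) - K (m+2) s * gh r (s - (m+1)))
noncomputable def dXs {Z : Type*} [CommRing Z] (K : ℕ → Z → ℝ) (r : Z → ℝ) (V : ℕ → Z → ℝ) (q : Z → ℝ)
    (m : ℕ) (s : Z) : ℝ :=
  (V (m+1) (s+1) * r (s+1) + K (m+1) (s+1) * q (s+1))
  - (V (m+1) s * r (s - (m+1)) + K (m+1) s * q (s - (m+1)))
noncomputable def dg {Z : Type*} [CommRing Z] (K : ℕ → Z → ℝ) (r : Z → ℝ) (V : ℕ → Z → ℝ) (q : Z → ℝ)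
    (s : Z) : ℝ :=
  -((V 1 (s+1) * r s ^ 2 + K 1 (s+1) * (2 * r s * q s)) * r (s+1)
      + K 1 (s+1) * r s ^ 2 * q (s+1))
  - ((V 1 s * r s ^ 2 + K 1 s * (2 * r s * q s)) * r (s-1) + K 1 s * r s ^ 2 * q (s-1))
noncomputable def dh {Z : Type*} [CommRing Z] (r : Z → ℝ) (q : Z → ℝ) (s : Z) : ℝ :=
  q s * r (s-1) + r s * q (s-1)
noncomputable def dYs {Z : Type*} [CommRing Z] (K : ℕ → Z → ℝ) (r : Z → ℝ) (V : ℕ → Z → ℝ) (q : Z → ℝ)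
    (m : ℕ) (s : Z) : ℝ :=
  ((V (m+1) (s+1) * gg K r (s+1) + K (m+1) (s+1) * dg K r V q (s+1))
    - (V (m+1) s * gg K r (s - (m+1)) + K (m+1) s * dg K r V q (s - (m+1))))
  + ((V (m+2) (s+2) * gh r (s+2) + K (m+2) (s+2) * dh r q (s+2))
    - (V (m+2) s * gh r (s - (m+1)) + K (m+2) s * dh r q (s - (m+1))))

theorem key {Z : Type*} [CommRing Z] (K : ℕ → Z → ℝ) (r : Z → ℝ) (m : ℕ) (s : Z) :
    dYs K r (gXs K r) (fun z => -(gXs K r 0 z) * r z ^ 2) m s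
    = dXs K r (gYs K r) (fun z => -(gYs K r 0 z) * r z ^ 2) m s := by
  simp only [dYs, dXs, dg, dh, gYs, gXs, gg, gh]
  push_cast
  ring_nf

/-- Extended components: `k^{n+1} = 1` and `k^m = 0` beyond (0-based index `m`). -/
noncomputable def extK {n N : ℕ} (w : ZMod N → Fin n → ℝ) (m : ℕ) (s : ZMod N) : ℝ :=
  if h : m < n then w s ⟨m, h⟩ else if m = n then 1 else 0

/-- Extended tangent vector: zero beyond the range. -/
noncomputable def extV {n N : ℕ} (v : ZMod N → Fin n → ℝ) (m : ℕ) (s : ZMod N) : ℝ :=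
  if h : m < n then v s ⟨m, h⟩ else 0

theorem sum_sel {n : ℕ} (f : Fin n → ℝ) (p : ℕ) :
    (∑ m : Fin n, if (m : ℕ) = p then f m else 0) = if h : p < n then f ⟨p, h⟩ else 0 := by
  split_ifs with h
  · rw [Finset.sum_eq_single ⟨p, h⟩]
    · simp
    · intro b _ hb
      rw [if_neg]
      intro h2
      exact hb (Fin.ext h2)
    · simp
  · apply Finset.sum_eq_zero
    intro m _
    rw [if_neg]
    have := m.2
    omega

/-- The term of `Hop` involving `θ^{j+1}`. -/
theorem Hop_eq {n N : ℕ} (w θ : ZMod N → Fin n → ℝ) (s : ZMod N) (i : Fin n) :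
    Hop w θ s i = ∑ j : Fin n,
      (extK w (i + j + 1) (s + ((j : ℕ) + 1)) * θ (s + ((j : ℕ) + 1)) j
        - extK w (i + j + 1) s * θ (s - ((i : ℕ) + 1)) j) := by
  unfold Hop
  rw [← Finset.sum_add_distrib]
  apply Finset.sum_congr rfl
  intro j _
  rw [sum_sel]
  unfold extK
  have hi := i.2
  have hj := j.2
  by_cases h1 : (i : ℕ) + j + 1 < n
  · have h2 : ¬ ((j : ℕ) + i + 1 = n) := by omega
    simp [h1, h2]
  · by_cases h2 : (i : ℕ) + j + 1 = n
    · have h3 : (j : ℕ) + i + 1 = n := by omega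
      have h4 : n - (i : ℕ) = j + 1 := by omega
      simp only [h1, h2, h3, h4]
      simp
    · have h3 : ¬ ((j : ℕ) + i + 1 = n) := by omega
      simp [h1, h2, h3]

theorem HopF_eq {n N : ℕ} (hn : 2 ≤ n) (w : ZMod N → Fin n → ℝ) (s : ZMod N) (i : Fin n) :
    Hop w (gradF w) s i = gXs (extK w) (fun z => (extK w 0 z)⁻¹) i s := by
  have h0 : 0 < n := by omega
  rw [Hop_eq, Finset.sum_eq_single ⟨0, h0⟩]
  · simp [gradF, gXs, extK, h0]
  · intro b _ hb
    have : (b : ℕ) ≠ 0 := fun h => hb (Fin.ext h)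
    simp [gradF, this]
  · simp

theorem HopG_eq {n N : ℕ} (hn : 2 ≤ n) (w : ZMod N → Fin n → ℝ) (s : ZMod N) (i : Fin n) :
    Hop w (gradG w) s i = gYs (extK w) (fun z => (extK w 0 z)⁻¹) i s := by
  have h0 : 0 < n := by omega
  have h1 : 1 < n := by omega
  have e0 : ∀ z, gradG w z ⟨0, h0⟩ = gg (extK w) (fun z => (extK w 0 z)⁻¹) z := by
    intro z
    simp only [gradG, sum_sel, gg, extK, h0, h1, dif_pos, if_true]
    simp only [div_eq_mul_inv, mul_inv, inv_pow]
    ring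
  have e1 : ∀ z, gradG w z ⟨1, h1⟩ = gh (fun z => (extK w 0 z)⁻¹) z := by
    intro z
    simp only [gradG, sum_sel, gh, extK, h0, dif_pos, if_true, one_ne_zero, if_false]
    simp only [div_eq_mul_inv, mul_inv, one_mul]
  rw [Hop_eq, Finset.sum_eq_add (⟨0, h0⟩ : Fin n) ⟨1, h1⟩]
  · rw [e0, e0, e1, e1]
    simp only [gYs]
    push_cast
    simp only [add_zero, zero_add, show (1 + 1 : ZMod N) = 2 by norm_num]
  · simp
  · intro b _ hb
    have hb0 : (b : ℕ) ≠ 0 := fun h => hb.1 (Fin.ext h)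
    have hb1 : (b : ℕ) ≠ 1 := fun h => hb.2 (Fin.ext h)
    simp [gradG, hb0, hb1]
  · simp
  · simp

theorem extK_hasFDerivAt {n N : ℕ} [NeZero N] (k : ZMod N → Fin n → ℝ) (m : ℕ) (s : ZMod N) :
    ∃ L : (ZMod N → Fin n → ℝ) →L[ℝ] ℝ, HasFDerivAt (fun w => extK w m s) L k ∧
      ∀ v, L v = extV v m s := by
  unfold extK extV
  by_cases h : m < n
  · refine ⟨(ContinuousLinearMap.proj (R := ℝ) (φ := fun _ : Fin n => ℝ) ⟨m, h⟩).comp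
      (ContinuousLinearMap.proj (R := ℝ) (φ := fun _ : ZMod N => Fin n → ℝ) s), ?_, ?_⟩
    · simp only [h, dif_pos]
      exact ((ContinuousLinearMap.proj (R := ℝ) (φ := fun _ : Fin n => ℝ) ⟨m, h⟩).comp
        (ContinuousLinearMap.proj (R := ℝ) (φ := fun _ : ZMod N => Fin n → ℝ) s)).hasFDerivAt
    · intro v
      simp [h]
  · refine ⟨0, ?_, ?_⟩
    · simp only [h, dif_neg, not_false_eq_true]
      exact hasFDerivAt_const _ _
    · simp [h]

theorem main_aux {n N : ℕ} [NeZero N] (hn : 2 ≤ n)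
    (k : ZMod N → Fin n → ℝ) (hk : ∀ s, extK k 0 s ≠ 0) (m : ℕ) (s : ZMod N) :
    (∃ L : (ZMod N → Fin n → ℝ) →L[ℝ] ℝ,
      HasFDerivAt (fun w => gXs (extK w) (fun z => (extK w 0 z)⁻¹) m s) L k ∧
      ∀ v, L v = dXs (extK k) (fun z => (extK k 0 z)⁻¹) (extV v)
        (fun z => -(extV v 0 z) * ((extK k 0 z)⁻¹) ^ 2) m s) ∧
    (∃ L : (ZMod N → Fin n → ℝ) →L[ℝ] ℝ,
      HasFDerivAt (fun w => gYs (extK w) (fun z => (extK w 0 z)⁻¹) m s) L k ∧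
      ∀ v, L v = dYs (extK k) (fun z => (extK k 0 z)⁻¹) (extV v)
        (fun z => -(extV v 0 z) * ((extK k 0 z)⁻¹) ^ 2) m s) := by
  choose L hL hLv using fun m s => extK_hasFDerivAt (n := n) (N := N) k m s
  have hr : ∀ z, HasFDerivAt (fun w : ZMod N → Fin n → ℝ => (extK w 0 z)⁻¹)
      ((-(((extK k 0 z)⁻¹) ^ 2)) • L 0 z) k := by
    intro z
    have := (hasDerivAt_inv (hk z)).comp_hasFDerivAt k (hL 0 z)
    rw [inv_pow]
    exact this
  have hg : ∀ z, HasFDerivAt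
      (fun w : ZMod N → Fin n → ℝ => gg (extK w) (fun z => (extK w 0 z)⁻¹) z) _ k := fun z =>
    ((((hL 1 (z+1)).mul ((hr z).pow 2)).mul (hr (z+1))).neg).sub
      (((hL 1 z).mul ((hr z).pow 2)).mul (hr (z-1)))
  have hh : ∀ z, HasFDerivAt
      (fun w : ZMod N → Fin n → ℝ => gh (fun z => (extK w 0 z)⁻¹) z) _ k := fun z =>
    (hr z).mul (hr (z-1))
  constructor
  · refine ⟨_, ((hL (m+1) (s+1)).mul (hr (s+1))).sub
      ((hL (m+1) s).mul (hr (s - (m+1)))), ?_⟩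
    intro v
    simp [hLv, dXs]
    ring
  · refine ⟨_, (((hL (m+1) (s+1)).mul (hg (s+1))).sub
      ((hL (m+1) s).mul (hg (s - (m+1))))).add
      (((hL (m+2) (s+2)).mul (hh (s+2))).sub
      ((hL (m+2) s).mul (hh (s - (m+1))))), ?_⟩
    intro v
    simp [hLv, dYs, dg, dh]
    ring

theorem extV_HopF {n N : ℕ} (hn : 2 ≤ n) (k : ZMod N → Fin n → ℝ) :
    extV (Hop k (gradF k)) = gXs (extK k) (fun z => (extK k 0 z)⁻¹) := by
  funext m s
  unfold extV
  split_ifs with h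
  · rw [HopF_eq hn]
  · have h1 : ¬ (m + 1 < n) := by omega
    have h2 : ¬ (m + 1 = n) := by omega
    simp [gXs, extK, h1, h2]

theorem extV_HopG {n N : ℕ} (hn : 2 ≤ n) (k : ZMod N → Fin n → ℝ) :
    extV (Hop k (gradG k)) = gYs (extK k) (fun z => (extK k 0 z)⁻¹) := by
  funext m s
  unfold extV
  split_ifs with h
  · rw [HopG_eq hn]
  · have h1 : ∀ z, extK k (m + 1) z = 0 := by
      intro z
      rw [extK, dif_neg (by omega), if_neg (by omega)]
    have h2 : ∀ z, extK k (m + 2) z = 0 := by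
      intro z
      rw [extK, dif_neg (by omega), if_neg (by omega)]
    simp [gYs, h1, h2]

/-- the Hamiltonian vector fields `X(k) = ℋ(k)∇F(k)` and
`Y(k) = ℋ(k)∇G(k)` commute on the open set `{k : k^1_s ≠ 0 ∀s}`: their Lie
bracket `(DY)(k)[X(k)] − (DX)(k)[Y(k)]` vanishes. -/
theorem stmt_11 {n N : ℕ} [NeZero N] (hn : 2 ≤ n)
    (k : ZMod N → Fin n → ℝ) (hk : ∀ s, k s ⟨0, by omega⟩ ≠ 0) :
    (fderiv ℝ (fun w : ZMod N → Fin n → ℝ => Hop w (gradG w)) k)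
        (Hop k (gradF k))
      - (fderiv ℝ (fun w : ZMod N → Fin n → ℝ => Hop w (gradF w)) k)
        (Hop k (gradG k)) = 0 := by
  have hk' : ∀ s, extK k 0 s ≠ 0 := by
    intro s
    have h0 : 0 < n := by omega
    simpa [extK, h0] using hk s
  choose LX hX hXv using fun m s => (main_aux hn k hk' m s).1
  choose LY hY hYv using fun m s => (main_aux hn k hk' m s).2
  have dX : HasFDerivAt (fun w : ZMod N → Fin n → ℝ => Hop w (gradF w))
      (ContinuousLinearMap.pi fun s => ContinuousLinearMap.pi fun i : Fin n => LX i s) k := by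
    refine hasFDerivAt_pi.2 fun s => hasFDerivAt_pi.2 fun i => ?_
    simp only [HopF_eq hn]
    exact hX i s
  have dY : HasFDerivAt (fun w : ZMod N → Fin n → ℝ => Hop w (gradG w))
      (ContinuousLinearMap.pi fun s => ContinuousLinearMap.pi fun i : Fin n => LY i s) k := by
    refine hasFDerivAt_pi.2 fun s => hasFDerivAt_pi.2 fun i => ?_
    simp only [HopG_eq hn]
    exact hY i s
  rw [dX.fderiv, dY.fderiv]
  funext s i
  simp only [Pi.sub_apply, ContinuousLinearMap.coe_pi', Pi.zero_apply]
  rw [hXv, hYv, extV_HopF hn, extV_HopG hn, sub_eq_zero]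
  exact key _ _ _ _
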